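/- Let n ≥ 3, let R > 0, let b ∈ ℝ and C > 0, and let U be a positive harmonic function on E = {x ∈ ℝⁿ : ‖x‖ > R} satisfying |U(x) − 1 − b·‖x‖^{2-n}| ≤ C·‖x‖^{1-n} on E. Define the metric coefficients g_ij(x) = U(x)^{4/(n-2)} δ_ij on E. Then the ADM mass limit exists and equals 2b; that is, (1/(2(n-1)ω_{n-1})) · lim_{σ→∞} ∫_{{‖x‖=σ}} Σ_{i,j=1}^{n} (∂_i g_ij(x) − ∂_j g_ii(x)) · (x_j/σ) dμ(x) = 2b, where the integral is with respect to the (n-1)-dimensional Hausdorff measure μ on the sphere {‖x‖ = σ}. -/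

import Mathlib

open Filter MeasureTheory

/-- A function is harmonic on an open subset of `ℝⁿ` if it is smooth there and its
Euclidean Laplacian (the sum of its pure second partial derivatives) vanishes
identically. -/
def HarmonicOnSet {n : ℕ} (f : EuclideanSpace ℝ (Fin n) → ℝ)
    (Ω : Set (EuclideanSpace ℝ (Fin n))) : Prop :=
  ContDiffOn ℝ (⊤ : ℕ∞) f Ω ∧
    ∀ x ∈ Ω, ∑ i : Fin n,
      fderiv ℝ (fun y => fderiv ℝ f y (EuclideanSpace.single i (1:ℝ))) x
        (EuclideanSpace.single i (1:ℝ)) = 0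

/-- The conformally flat metric coefficients `g_ij = U^{4/(n-2)} δ_ij`. -/
noncomputable def confMetric (n : ℕ) (U : EuclideanSpace ℝ (Fin n) → ℝ)
    (x : EuclideanSpace ℝ (Fin n)) (i j : Fin n) : ℝ :=
  U x ^ ((4 : ℝ) / ((n : ℝ) - 2)) * (if i = j then 1 else 0)

/-!
The integrand is `-(n - 1) ∂f/∂r` for `f = U ^ p`, `p = 4 / (n - 2)`, so everything reduces to the
limit of the flux of `∇f` through large spheres. Differentiating a possibly non-harmonic function
such as `f` termwise in its expansion is avoided as follows. Since `U` is harmonic,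
`Δ f = p (p - 1) U ^ (p - 2) |∇U|²` has a constant sign, so the flux is monotone in the radius.
Up to the weight `r ^ (1 - n)`, the flux is the derivative of the spherical mean of `f`, whose
asymptotics are `1 + p b r ^ (2 - n) + o(r ^ (2 - n))`. A monotone density is squeezed between the
slopes of its primitive over `[r / 2, r]` and `[r, 2 r]`, so the flux converges to
`-(n - 2) p b ω_{n-1}`, without any estimate on `∇U`.

That the flux differentiates to the integral of `Δ f` is obtained from rotation invariance instead
of the divergence theorem: derivatives along the rotation fields `x_i ∂_j - x_j ∂_i` integrate to
zero over spheres, and `r² Δ` is the sum of the squares of these fields plus a second-order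
operator in `r ∂/∂r`.
-/

open Metric Module Set Asymptotics
open scoped Topology InnerProductSpace Laplacian

section HausdorffSphere

variable {E : Type*} [NormedAddCommGroup E] [InnerProductSpace ℝ E]

theorem cast_finrank_orthogonal_span_singleton [FiniteDimensional ℝ E] {v : E} (hv : v ≠ 0) :
    (finrank ℝ (ℝ ∙ v)ᗮ : ℝ) = finrank ℝ E - 1 := by
  have h := (ℝ ∙ v).finrank_add_finrank_orthogonal
  rw [finrank_span_singleton hv] at h
  rw [← h]
  push_cast
  ring

theorem hemisphere_subset_image_stereoInvFunAux {v : E} (hv : ‖v‖ = 1) :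
    sphere (0 : E) 1 ∩ {x | ⟪v, x⟫_ℝ ≤ 0} ⊆
      (fun w : (ℝ ∙ v)ᗮ => stereoInvFunAux v w) '' closedBall 0 2 := by
  rintro x ⟨hx, hvx : ⟪v, x⟫_ℝ ≤ 0⟩
  have hxv : x ≠ v := by
    rintro rfl
    rw [real_inner_self_eq_norm_sq, hv] at hvx
    norm_num at hvx
  refine ⟨stereoToFun v x, ?_, congrArg Subtype.val (stereo_left_inv hv (x := ⟨x, hx⟩) hxv)⟩
  have hproj : ‖(ℝ ∙ v)ᗮ.orthogonalProjectionOnto x‖ ≤ 1 :=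
    ((ℝ ∙ v)ᗮ.norm_orthogonalProjectionOnto_apply_le x).trans (mem_sphere_zero_iff_norm.1 hx).le
  have hden : |1 - ⟪v, x⟫_ℝ|⁻¹ ≤ 1 :=
    inv_le_one_of_one_le₀ (le_trans (by linarith) (le_abs_self _))
  rw [mem_closedBall_zero_iff, stereoToFun_apply, innerSL_apply_apply, norm_smul, norm_div,
    Real.norm_two, Real.norm_eq_abs, div_eq_mul_inv, mul_assoc]
  exact mul_le_of_le_one_right zero_le_two (mul_le_one₀ hden (norm_nonneg _) hproj)

theorem ball_subset_orthogonalProjectionOnto_image_sphere {v : E} (hv : ‖v‖ = 1) :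
    ball 0 1 ⊆ (ℝ ∙ v)ᗮ.orthogonalProjectionOnto '' sphere (0 : E) 1 := by
  intro w hw
  have hw1 : ‖w‖ ^ 2 ≤ 1 := by
    rw [mem_ball_zero_iff] at hw
    exact pow_le_one₀ (norm_nonneg w) hw.le
  have hvw : ⟪(w : E), v⟫_ℝ = 0 :=
    (ℝ ∙ v).inner_left_of_mem_orthogonal (Submodule.mem_span_singleton_self v) w.2
  refine ⟨w + √(1 - ‖w‖ ^ 2) • v, ?_, ?_⟩
  · rw [mem_sphere_zero_iff_norm, ← sq_eq_sq₀ (norm_nonneg _) zero_le_one,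
      norm_add_sq_real, inner_smul_right, hvw, norm_smul, hv, mul_one, Real.norm_eq_abs, sq_abs,
      Real.sq_sqrt (by linarith)]
    simp
  · simp [Submodule.orthogonalProjectionOnto_orthogonalComplement_singleton_eq_zero]

variable [FiniteDimensional ℝ E] [MeasurableSpace E] [BorelSpace E]

theorem hausdorffMeasure_hemisphere_lt_top {v : E} (hv : ‖v‖ = 1) :
    μH[(finrank ℝ E : ℝ) - 1] (sphere (0 : E) 1 ∩ {x | ⟪v, x⟫_ℝ ≤ 0}) < ⊤ := by
  have hv0 : v ≠ 0 := norm_ne_zero_iff.1 (by simp [hv])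
  have hsmooth : ContDiff ℝ 1 fun w : (ℝ ∙ v)ᗮ => stereoInvFunAux v w :=
    contDiff_stereoInvFunAux.comp (ℝ ∙ v)ᗮ.subtypeL.contDiff
  obtain ⟨K, hK⟩ := hsmooth.contDiffOn.exists_lipschitzOnWith one_ne_zero
    (convex_closedBall 0 2) (isCompact_closedBall 0 2)
  rw [← cast_finrank_orthogonal_span_singleton hv0]
  calc _ ≤ _ := measure_mono (hemisphere_subset_image_stereoInvFunAux hv)
    _ ≤ _ := hK.hausdorffMeasure_image_le (Nat.cast_nonneg _)
    _ < ⊤ := ENNReal.mul_lt_top (ENNReal.rpow_lt_top_of_nonneg (Nat.cast_nonneg _) (by simp))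
      (isCompact_closedBall 0 2).measure_lt_top

theorem hausdorffMeasure_sphere_lt_top :
    μH[(finrank ℝ E : ℝ) - 1] (sphere (0 : E) 1) < ⊤ := by
  rcases subsingleton_or_nontrivial E with hE | hE
  · simp [sphere_eq_empty_of_subsingleton one_ne_zero]
  obtain ⟨v, hv⟩ := exists_norm_eq E zero_le_one
  have hcover : sphere (0 : E) 1 ⊆ sphere (0 : E) 1 ∩ {x | ⟪v, x⟫_ℝ ≤ 0} ∪
      sphere (0 : E) 1 ∩ {x | ⟪-v, x⟫_ℝ ≤ 0} := fun x hx =>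
    (le_total ⟪v, x⟫_ℝ 0).imp (fun h => ⟨hx, h⟩) fun h => ⟨hx, by simpa using h⟩
  exact (measure_mono hcover).trans_lt (measure_union_lt_top
    (hausdorffMeasure_hemisphere_lt_top hv) (hausdorffMeasure_hemisphere_lt_top (by simpa)))

theorem hausdorffMeasure_sphere_ne_zero [Nontrivial E] :
    μH[(finrank ℝ E : ℝ) - 1] (sphere (0 : E) 1) ≠ 0 := by
  obtain ⟨v, hv⟩ := exists_norm_eq E zero_le_one
  rw [← cast_finrank_orthogonal_span_singleton (norm_ne_zero_iff.1 (hv.trans_ne one_ne_zero))]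
  intro hzero
  have himage := (ℝ ∙ v)ᗮ.orthogonalProjectionOnto.lipschitz.hausdorffMeasure_image_le
    (Nat.cast_nonneg (finrank ℝ (ℝ ∙ v)ᗮ)) (sphere (0 : E) 1)
  rw [hzero, mul_zero] at himage
  exact ((measure_ball_pos μH[finrank ℝ (ℝ ∙ v)ᗮ] 0 one_pos).trans_le
    (measure_mono (ball_subset_orthogonalProjectionOnto_image_sphere hv))).not_ge himage

end HausdorffSphere

section Scaling

open scoped Pointwise

variable {E : Type*} [NormedAddCommGroup E] [NormedSpace ℝ E] [MeasurableSpace E] [BorelSpace E]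

theorem ofReal_rpow_smul_map_smul_hausdorffMeasure {d r : ℝ} (hd : 0 ≤ d) (hr : 0 < r) :
    ENNReal.ofReal (r ^ d) • Measure.map (r • ·) (μH[d] : Measure E) = μH[d] := by
  have hemb : MeasurableEmbedding (r • · : E → E) :=
    (Homeomorph.smulOfNeZero r hr.ne').measurableEmbedding
  ext s -
  have hs : r • ((r • ·) ⁻¹' s) = s := by rw [Set.preimage_smul₀ hr.ne', smul_inv_smul₀ hr.ne']
  rw [Measure.smul_apply, hemb.map_apply]
  conv_rhs => rw [← hs, Measure.hausdorffMeasure_smul₀ hd hr.ne']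
  rw [Real.nnnorm_of_nonneg hr.le, ENNReal.smul_def, ENNReal.ofReal,
    Real.toNNReal_rpow_of_nonneg hr.le, Real.toNNReal_of_nonneg hr.le]

theorem setIntegral_sphere_hausdorffMeasure {G : Type*} [NormedAddCommGroup G] [NormedSpace ℝ G]
    {d r : ℝ} (hd : 0 ≤ d) (hr : 0 < r) (g : E → G) :
    ∫ x in sphere (0 : E) r, g x ∂μH[d] =
      r ^ d • ∫ x in sphere (0 : E) 1, g (r • x) ∂μH[d] := by
  have hpre : (r • ·) ⁻¹' sphere (0 : E) r = sphere 0 1 := by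
    ext x
    simp [norm_smul, abs_of_pos hr, hr.ne']
  have hemb : MeasurableEmbedding (r • · : E → E) :=
    (Homeomorph.smulOfNeZero r hr.ne').measurableEmbedding
  conv_lhs => rw [← ofReal_rpow_smul_map_smul_hausdorffMeasure hd hr]
  rw [Measure.restrict_smul, integral_smul_measure, hemb.setIntegral_map, hpre,
    ENNReal.toReal_ofReal (Real.rpow_nonneg hr.le d)]

end Scaling

section ParametricIntegral

variable {X G : Type*} [NormedAddCommGroup X] [NormedSpace ℝ X] [MeasurableSpace X] [BorelSpace X]
  [NormedAddCommGroup G] [NormedSpace ℝ G] {ν : Measure X} {K : Set X}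

theorem hasDerivAt_setIntegral_of_contDiffAt (hK : IsCompact K) (hν : ν K ≠ ⊤)
    {F : ℝ × X → G} {F' : X → G} {t : ℝ} (hF : ∀ x ∈ K, ContDiffAt ℝ 1 F (t, x))
    (hF' : ∀ x ∈ K, HasDerivAt (fun s => F (s, x)) (F' x) t) :
    HasDerivAt (fun s => ∫ x in K, F (s, x) ∂ν) (∫ x in K, F' x ∂ν) t := by
  have hopen : IsOpen {p | ContDiffAt ℝ 1 F p} := isOpen_iff_mem_nhds.2 fun p hp =>
    ContDiffAt.eventually (show ContDiffAt ℝ 1 F p from hp) (by simp)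
  obtain ⟨I, V, hI, -, htI, hKV, hIV⟩ := generalized_tube_lemma isCompact_singleton hK hopen
    (by rintro ⟨_, x⟩ ⟨rfl, hx⟩; exact hF x hx)
  obtain ⟨ε, hε, hεI⟩ := nhds_basis_closedBall.mem_iff.1 (hI.mem_nhds (htI rfl))
  have hsmooth : ∀ s ∈ closedBall t ε, ∀ x ∈ K, ContDiffAt ℝ 1 F (s, x) :=
    fun s hs x hx => hIV ⟨hεI hs, hKV hx⟩
  have hline : ∀ s ∈ closedBall t ε, ∀ x ∈ K,
      HasDerivAt (fun u => F (u, x)) (fderiv ℝ F (s, x) (1, 0)) s := fun s hs x hx =>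
    ((hsmooth s hs x hx).differentiableAt one_ne_zero).hasFDerivAt.comp_hasDerivAt s
      ((hasDerivAt_id s).prodMk (hasDerivAt_const s x))
  have hderiv_cont : ContinuousOn (fun p => fderiv ℝ F p (1, 0)) (closedBall t ε ×ˢ K) :=
    fun p hp => (((hsmooth p.1 hp.1 p.2 hp.2).continuousAt_fderiv (by simp)).clm_apply
      continuousAt_const).continuousWithinAt
  have ht : t ∈ closedBall t ε := mem_closedBall_self hε.le
  rw [setIntegral_congr_fun hK.measurableSet fun x hx => (hF' x hx).unique (hline t ht x hx)]
  obtain ⟨M, hM⟩ := ((isCompact_closedBall t ε).prod hK).exists_bound_of_continuousOn hderiv_cont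
  have hintegrable : ∀ s ∈ closedBall t ε, IntegrableOn (fun x => F (s, x)) K ν := fun s hs =>
    ContinuousOn.integrableOn_of_subset_isCompact
      (fun x hx => ((hsmooth s hs x hx).continuousAt.comp
        (Continuous.prodMk_right s).continuousAt).continuousWithinAt)
      hK hK.measurableSet Subset.rfl hν
  have hderiv_meas : IntegrableOn (fun x => fderiv ℝ F (t, x) (1, 0)) K ν :=
    (hderiv_cont.comp (Continuous.prodMk_right t).continuousOn fun x hx => ⟨ht, hx⟩
      ).integrableOn_of_subset_isCompact hK hK.measurableSet Subset.rfl hν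
  refine (hasDerivAt_integral_of_dominated_loc_of_deriv_le (bound := fun _ => M)
    (F := fun s x => F (s, x)) (F' := fun s x => fderiv ℝ F (s, x) (1, 0))
    (closedBall_mem_nhds t hε) ?_ (hintegrable t ht) hderiv_meas.aestronglyMeasurable ?_
    (integrableOn_const hν) ?_).2
  · filter_upwards [closedBall_mem_nhds t hε] with s hs
    exact (hintegrable s hs).aestronglyMeasurable
  · filter_upwards [ae_restrict_mem hK.measurableSet] with x hx s hs using hM (s, x) ⟨hs, hx⟩
  · filter_upwards [ae_restrict_mem hK.measurableSet] with x hx s hs using hline s hs x hx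

end ParametricIntegral

section DerivAlong

variable {E : Type*} [NormedAddCommGroup E] [NormedSpace ℝ E] {f : E → ℝ} {x : E}

/-- The derivative of `f` along the linear vector field `x ↦ A x`. For `A` the identity this is the
Euler operator `r ∂/∂r`; for skew-adjoint `A` the field is tangent to all spheres centred at `0`. -/
noncomputable def derivAlong (A : E →L[ℝ] E) (f : E → ℝ) (x : E) : ℝ :=
  fderiv ℝ f x (A x)

theorem contDiffAt_derivAlong {k m : WithTop ℕ∞} (hf : ContDiffAt ℝ m f x) (hkm : k + 1 ≤ m)
    (A : E →L[ℝ] E) : ContDiffAt ℝ k (derivAlong A f) x :=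
  (hf.fderiv_right hkm).clm_apply A.contDiff.contDiffAt

theorem continuousOn_derivAlong_derivAlong {K : Set E} (hf : ∀ x ∈ K, ContDiffAt ℝ 2 f x)
    (A : E →L[ℝ] E) : ContinuousOn (derivAlong A (derivAlong A f)) K := fun x hx =>
  (contDiffAt_derivAlong (k := 0) (contDiffAt_derivAlong (k := 1) (hf x hx) le_rfl A) (by simp) A
    ).continuousAt.continuousWithinAt

theorem derivAlong_derivAlong (hf : ContDiffAt ℝ 2 f x) (A : E →L[ℝ] E) :
    derivAlong A (derivAlong A f) x =
      fderiv ℝ (fderiv ℝ f) x (A x) (A x) + fderiv ℝ f x (A (A x)) := by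
  have hdf : HasFDerivAt (fderiv ℝ f) (fderiv ℝ (fderiv ℝ f) x) x :=
    ((hf.fderiv_right (m := 1) le_rfl).differentiableAt one_ne_zero).hasFDerivAt
  have h : HasFDerivAt (derivAlong A f) _ x := hdf.clm_apply A.hasFDerivAt
  rw [derivAlong, h.fderiv]
  simp [add_comm]

end DerivAlong

section SphereIntegral

theorem contDiff_exp_smul {𝔸 : Type*} [NormedRing 𝔸] [NormedAlgebra ℝ 𝔸] [CompleteSpace 𝔸]
    {k : WithTop ℕ∞} (a : 𝔸) : ContDiff ℝ k fun t : ℝ => NormedSpace.exp (t • a) :=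
  contDiff_iff_contDiffAt.2 fun t => (NormedSpace.exp_analytic (𝕂 := ℝ) (t • a)).contDiffAt.comp t
    (contDiff_id.smul contDiff_const).contDiffAt

theorem smul_mem_sphere {E : Type*} [NormedAddCommGroup E] [NormedSpace ℝ E] {s : ℝ} (hs : 0 < s)
    {x : E} (hx : x ∈ sphere (0 : E) 1) : s • x ∈ sphere (0 : E) s := by
  simpa [norm_smul, abs_of_pos hs, hs.ne'] using hx

variable {E : Type*} [NormedAddCommGroup E] [InnerProductSpace ℝ E] [MeasurableSpace E]
  [BorelSpace E] {f g : E → ℝ} {s : ℝ}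

/-- The integral over the sphere of radius `s`, pulled back to the unit sphere: it is the surface
integral of `f` divided by `s ^ (n - 1)`, hence `ω_{n-1}` times the spherical mean of `f`. -/
noncomputable def sphereIntegral (f : E → ℝ) (s : ℝ) : ℝ :=
  ∫ x in sphere (0 : E) 1, f (s • x) ∂μH[(finrank ℝ E : ℝ) - 1]

theorem sphereIntegral_congr (hs : 0 < s) (h : ∀ x ∈ sphere (0 : E) s, f x = g x) :
    sphereIntegral f s = sphereIntegral g s :=
  setIntegral_congr_fun isClosed_sphere.measurableSet fun _ hx => h _ (smul_mem_sphere hs hx)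

theorem sphereIntegral_const_mul (c : ℝ) (f : E → ℝ) (s : ℝ) :
    sphereIntegral (fun x => c * f x) s = c * sphereIntegral f s :=
  integral_const_mul c _

theorem sphereIntegral_const (c s : ℝ) : sphereIntegral (fun _ : E => c) s =
    c * (μH[(finrank ℝ E : ℝ) - 1]).real (sphere (0 : E) 1) := by
  simp [sphereIntegral, mul_comm]

theorem sphereIntegral_comp_linearIsometryEquiv (Φ : E ≃ₗᵢ[ℝ] E) (f : E → ℝ) (s : ℝ) :
    sphereIntegral (f ∘ Φ) s = sphereIntegral f s := by
  have hmp := Φ.toIsometryEquiv.measurePreserving_hausdorffMeasure ((finrank ℝ E : ℝ) - 1)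
  have h := hmp.setIntegral_preimage_emb Φ.toHomeomorph.measurableEmbedding (fun x => f (s • x))
    (sphere 0 1)
  have hpre : Φ ⁻¹' sphere (0 : E) 1 = sphere 0 1 := by ext; simp
  simp only [sphereIntegral, Function.comp_apply, map_smul]
  rw [← h]
  exact congrArg (fun S => ∫ x in S, f (s • Φ x) ∂μH[(finrank ℝ E : ℝ) - 1]) hpre.symm

variable [FiniteDimensional ℝ E]

theorem integrableOn_sphere (hs : 0 < s) (hf : ContinuousOn f (sphere 0 s)) :
    IntegrableOn (fun x => f (s • x)) (sphere (0 : E) 1) μH[(finrank ℝ E : ℝ) - 1] :=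
  (hf.comp (continuous_const_smul s).continuousOn fun _ => smul_mem_sphere hs
    ).integrableOn_of_subset_isCompact (isCompact_sphere 0 1) isClosed_sphere.measurableSet
    Subset.rfl hausdorffMeasure_sphere_lt_top.ne

theorem sphereIntegral_add_const_mul (hs : 0 < s) (hf : ContinuousOn f (sphere 0 s))
    (hg : ContinuousOn g (sphere 0 s)) (c : ℝ) :
    sphereIntegral (fun x => f x + c * g x) s = sphereIntegral f s + c * sphereIntegral g s :=
  (integral_add (integrableOn_sphere hs hf) ((integrableOn_sphere hs hg).const_mul c)).trans
    (congrArg _ (sphereIntegral_const_mul c g s))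

theorem sphereIntegral_finsetSum {ι : Type*} {t : Finset ι} {F : ι → E → ℝ} (hs : 0 < s)
    (hF : ∀ i ∈ t, ContinuousOn (F i) (sphere 0 s)) :
    sphereIntegral (fun x => ∑ i ∈ t, F i x) s = ∑ i ∈ t, sphereIntegral (F i) s :=
  integral_finsetSum t fun i hi => integrableOn_sphere hs (hF i hi)

theorem hasDerivAt_sphereIntegral (hs : 0 < s) (hf : ∀ x ∈ sphere 0 s, ContDiffAt ℝ 1 f x) :
    HasDerivAt (sphereIntegral f) (s⁻¹ * sphereIntegral (derivAlong (.id ℝ E) f) s) s := by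
  have hfs : ∀ x ∈ sphere (0 : E) 1, ContDiffAt ℝ 1 f (s • x) := fun x hx =>
    hf _ (smul_mem_sphere hs hx)
  have hsmul : ContDiff ℝ 1 fun p : ℝ × E => p.1 • p.2 := contDiff_fst.smul contDiff_snd
  rw [← sphereIntegral_const_mul]
  refine hasDerivAt_setIntegral_of_contDiffAt (F := fun p : ℝ × E => f (p.1 • p.2))
    (isCompact_sphere 0 1) hausdorffMeasure_sphere_lt_top.ne
    (fun x hx => (hfs x hx).comp (s, x) hsmul.contDiffAt) fun x hx => ?_
  simpa [derivAlong, hs.ne', Function.comp_def] using ((hfs x hx).differentiableAt one_ne_zero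
    ).hasFDerivAt.comp_hasDerivAt s ((hasDerivAt_id s).smul_const x)

theorem sphereIntegral_derivAlong_of_mem_skewAdjoint {A : E →L[ℝ] E}
    (hA : A ∈ skewAdjoint (E →L[ℝ] E)) (hs : 0 < s) (hf : ∀ x ∈ sphere 0 s, ContDiffAt ℝ 1 f x) :
    sphereIntegral (derivAlong A f) s = 0 := by
  let := NormedAlgebra.restrictScalars ℚ ℝ (E →L[ℝ] E)
  have hrot : ∀ t : ℝ, sphereIntegral (fun x => f (NormedSpace.exp (t • A) x)) s =
      sphereIntegral f s := fun t =>
    have hunitary : NormedSpace.exp (t • A) ∈ unitary (E →L[ℝ] E) :=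
      NormedSpace.exp_mem_unitary_of_mem_skewAdjoint (skewAdjoint.smul_mem t hA)
    sphereIntegral_comp_linearIsometryEquiv
      (Unitary.linearIsometryEquiv ⟨NormedSpace.exp (t • A), hunitary⟩) f s
  have hflow : ContDiff ℝ 1 fun p : ℝ × E => NormedSpace.exp (p.1 • A) (s • p.2) :=
    ((contDiff_exp_smul A).comp contDiff_fst).clm_apply (contDiff_snd.const_smul s)
  have hfs : ∀ x ∈ sphere (0 : E) 1,
      ContDiffAt ℝ 1 f (NormedSpace.exp ((0 : ℝ) • A) (s • x)) := fun x hx => by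
    simpa using hf _ (smul_mem_sphere hs hx)
  have hderiv : HasDerivAt (fun t : ℝ => sphereIntegral (fun x => f (NormedSpace.exp (t • A) x)) s)
      (sphereIntegral (derivAlong A f) s) 0 := by
    refine hasDerivAt_setIntegral_of_contDiffAt
      (F := fun p : ℝ × E => f (NormedSpace.exp (p.1 • A) (s • p.2)))
      (isCompact_sphere 0 1) hausdorffMeasure_sphere_lt_top.ne
      (fun x hx => (hfs x hx).comp ((0 : ℝ), x) hflow.contDiffAt) fun x hx => ?_
    have hcurve := (hasDerivAt_exp_smul_const' A (0 : ℝ)).clm_apply (hasDerivAt_const 0 (s • x))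
    simpa [derivAlong, Function.comp_def] using
      ((hfs x hx).differentiableAt one_ne_zero).hasFDerivAt.comp_hasDerivAt 0 hcurve
  simp only [hrot] at hderiv
  exact hderiv.unique (hasDerivAt_const 0 _)

end SphereIntegral

section RotationGenerator

variable {E : Type*} [NormedAddCommGroup E] [InnerProductSpace ℝ E]

/-- The generator `w ↦ ⟪u, w⟫ v - ⟪v, w⟫ u` of the rotations in the plane spanned by two vectors. -/
noncomputable def rotationGenerator (u v : E) : E →L[ℝ] E :=
  InnerProductSpace.rankOne ℝ v u - InnerProductSpace.rankOne ℝ u v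

theorem rotationGenerator_apply (u v w : E) :
    rotationGenerator u v w = ⟪u, w⟫_ℝ • v - ⟪v, w⟫_ℝ • u := by
  simp [rotationGenerator]

theorem rotationGenerator_mem_skewAdjoint [CompleteSpace E] (u v : E) :
    rotationGenerator u v ∈ skewAdjoint (E →L[ℝ] E) := by
  rw [skewAdjoint.mem_iff, ContinuousLinearMap.star_eq_adjoint, rotationGenerator, map_sub,
    InnerProductSpace.adjoint_rankOne, InnerProductSpace.adjoint_rankOne, neg_sub]

variable {ι : Type*} [Fintype ι] (b : OrthonormalBasis ι ℝ E)

theorem sum_sum_apply_rotationGenerator_apply_apply (B : E →L[ℝ] E →L[ℝ] ℝ) (x : E) :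
    ∑ i, ∑ j, B (rotationGenerator (b i) (b j) x) (rotationGenerator (b i) (b j) x) =
      2 * (‖x‖ ^ 2 * ∑ i, B (b i) (b i) - B x x) := by
  have hterm : ∀ i j, B (rotationGenerator (b i) (b j) x) (rotationGenerator (b i) (b j) x) =
      ⟪b i, x⟫_ℝ ^ 2 * B (b j) (b j) + ⟪b j, x⟫_ℝ ^ 2 * B (b i) (b i) -
        (⟪b i, x⟫_ℝ * (⟪b j, x⟫_ℝ * B (b i) (b j)) +
          ⟪b j, x⟫_ℝ * (⟪b i, x⟫_ℝ * B (b j) (b i))) := fun i j => by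
    simp only [rotationGenerator_apply, map_sub, map_smul, sub_apply,
      smul_apply, smul_eq_mul]
    ring
  have hnorm : ‖x‖ ^ 2 = ∑ i, ⟪b i, x⟫_ℝ ^ 2 := by
    simpa using (b.sum_sq_norm_inner_right x).symm
  have hB : B x x = ∑ i, ∑ j, ⟪b i, x⟫_ℝ * (⟪b j, x⟫_ℝ * B (b i) (b j)) := by
    conv_lhs => rw [← b.sum_repr' x]
    simp only [map_sum, map_smul, sum_apply, smul_apply, smul_eq_mul, Finset.mul_sum]
    rw [Finset.sum_comm]
    exact Finset.sum_congr rfl fun i _ => Finset.sum_congr rfl fun j _ => mul_left_comm _ _ _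
  simp only [hterm, Finset.sum_sub_distrib, Finset.sum_add_distrib]
  rw [hB, hnorm, Finset.sum_comm (f := fun i j => ⟪b j, x⟫_ℝ ^ 2 * B (b i) (b i)),
    Finset.sum_comm (f := fun i j => ⟪b j, x⟫_ℝ * (⟪b i, x⟫_ℝ * B (b j) (b i))),
    Finset.sum_mul_sum]
  ring

theorem sum_sum_rotationGenerator_apply_rotationGenerator_apply (x : E) :
    ∑ i, ∑ j, rotationGenerator (b i) (b j) (rotationGenerator (b i) (b j) x) =
      (-2 * ((finrank ℝ E : ℝ) - 1)) • x := by
  classical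
  have hterm : ∀ i j, rotationGenerator (b i) (b j) (rotationGenerator (b i) (b j) x) =
      (if i = j then 2 • ⟪b i, x⟫_ℝ • b i else 0) - ⟪b j, x⟫_ℝ • b j - ⟪b i, x⟫_ℝ • b i :=
    fun i j => by
      obtain rfl | hij := eq_or_ne i j
      · simp only [rotationGenerator_apply, sub_self, if_true]
        module
      · simp [rotationGenerator_apply, inner_sub_right, inner_smul_right, b.inner_eq_ite, hij,
          hij.symm]
  simp only [hterm, Finset.sum_sub_distrib, Finset.sum_ite_eq, Finset.mem_univ, if_true,
    b.sum_repr', Finset.sum_const, ← Finset.smul_sum, Finset.card_univ,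
    ← finrank_eq_card_basis b.toBasis]
  module

end RotationGenerator

section Laplacian

open InnerProductSpace

variable {E : Type*} [NormedAddCommGroup E] [InnerProductSpace ℝ E] [FiniteDimensional ℝ E]
  {f : E → ℝ} {x : E} {s : ℝ}

theorem laplacian_eq_sum_fderiv_fderiv {ι : Type*} [Fintype ι] (b : OrthonormalBasis ι ℝ E)
    (f : E → ℝ) (x : E) : Δ f x = ∑ i, fderiv ℝ (fderiv ℝ f) x (b i) (b i) := by
  rw [laplacian_eq_iteratedFDeriv_orthonormalBasis f b]
  simp [iteratedFDeriv_two_apply]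

theorem sum_sum_derivAlong_rotationGenerator {ι : Type*} [Fintype ι] (b : OrthonormalBasis ι ℝ E)
    (hf : ContDiffAt ℝ 2 f x) :
    ∑ i, ∑ j, derivAlong (rotationGenerator (b i) (b j))
        (derivAlong (rotationGenerator (b i) (b j)) f) x =
      2 * (‖x‖ ^ 2 * Δ f x - (derivAlong (.id ℝ E) (derivAlong (.id ℝ E) f) x +
        ((finrank ℝ E : ℝ) - 2) * derivAlong (.id ℝ E) f x)) := by
  simp only [derivAlong_derivAlong hf, Finset.sum_add_distrib, ← map_sum,
    sum_sum_apply_rotationGenerator_apply_apply,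
    sum_sum_rotationGenerator_apply_rotationGenerator_apply, ← laplacian_eq_sum_fderiv_fderiv]
  simp only [ContinuousLinearMap.id_apply, derivAlong, map_smul, smul_eq_mul]
  ring

theorem sum_sq_apply_eq_norm_sq {ι : Type*} [Fintype ι] (b : OrthonormalBasis ι ℝ E)
    (l : E →L[ℝ] ℝ) : ∑ i, l (b i) ^ 2 = ‖l‖ ^ 2 := by
  simpa using b.sum_sq_norm_inner_left ((toDual ℝ E).symm l)

theorem laplacian_comp {φ φ' : ℝ → ℝ} {φ'' : ℝ} (hf : ContDiffAt ℝ 2 f x)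
    (hφ : ∀ᶠ t in 𝓝 (f x), HasDerivAt φ (φ' t) t) (hφ' : HasDerivAt φ' φ'' (f x)) :
    Δ (φ ∘ f) x = φ' (f x) * Δ f x + φ'' * ‖fderiv ℝ f x‖ ^ 2 := by
  have hdf : HasFDerivAt f (fderiv ℝ f x) x := (hf.differentiableAt two_ne_zero).hasFDerivAt
  have hddf : HasFDerivAt (fderiv ℝ f) (fderiv ℝ (fderiv ℝ f) x) x :=
    ((hf.fderiv_right (m := 1) le_rfl).differentiableAt one_ne_zero).hasFDerivAt
  have hfderiv : fderiv ℝ (φ ∘ f) =ᶠ[𝓝 x] fun y => φ' (f y) • fderiv ℝ f y := by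
    filter_upwards [hf.eventually (by simp), hf.continuousAt.eventually hφ] with y hy hφy
    exact (hφy.comp_hasFDerivAt y (hy.differentiableAt two_ne_zero).hasFDerivAt).fderiv
  have hfderiv2 : HasFDerivAt (fderiv ℝ (φ ∘ f)) _ x :=
    ((hφ'.comp_hasFDerivAt x hdf).smul hddf).congr_of_eventuallyEq hfderiv
  let b := stdOrthonormalBasis ℝ E
  rw [laplacian_eq_sum_fderiv_fderiv b, laplacian_eq_sum_fderiv_fderiv b, hfderiv2.fderiv,
    ← sum_sq_apply_eq_norm_sq b, Finset.mul_sum, Finset.mul_sum, ← Finset.sum_add_distrib]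
  refine Finset.sum_congr rfl fun i _ => ?_
  simp
  ring

theorem laplacian_rpow (hf : ContDiffAt ℝ 2 f x) (hx : 0 < f x) (p : ℝ) :
    Δ (fun y => f y ^ p) x = p * f x ^ (p - 1) * Δ f x +
      p * (p - 1) * f x ^ (p - 2) * ‖fderiv ℝ f x‖ ^ 2 := by
  refine laplacian_comp hf (φ := (· ^ p)) (φ' := fun t => p * t ^ (p - 1))
    (φ'' := p * (p - 1) * f x ^ (p - 2)) ?_ ?_
  · filter_upwards [eventually_ne_nhds hx.ne'] with t ht
    exact Real.hasDerivAt_rpow_const (Or.inl ht)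
  · refine ((Real.hasDerivAt_rpow_const (Or.inl hx.ne')).const_mul p).congr_deriv ?_
    rw [show p - 2 = p - 1 - 1 by ring, mul_assoc]

variable [MeasurableSpace E] [BorelSpace E]

theorem sphereIntegral_sum_sum_derivAlong_rotationGenerator {ι : Type*} [Fintype ι] (b : ι → E)
    (hs : 0 < s) (hf : ∀ x ∈ sphere 0 s, ContDiffAt ℝ 2 f x) :
    sphereIntegral (fun x => ∑ i, ∑ j, derivAlong (rotationGenerator (b i) (b j))
      (derivAlong (rotationGenerator (b i) (b j)) f) x) s = 0 := by
  have hcont : ∀ i j, ContinuousOn (derivAlong (rotationGenerator (b i) (b j))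
      (derivAlong (rotationGenerator (b i) (b j)) f)) (sphere 0 s) := fun i j =>
    continuousOn_derivAlong_derivAlong hf _
  rw [sphereIntegral_finsetSum hs fun i _ => continuousOn_finsetSum _ fun j _ => hcont i j]
  refine Finset.sum_eq_zero fun i _ => ?_
  rw [sphereIntegral_finsetSum hs fun j _ => hcont i j]
  exact Finset.sum_eq_zero fun j _ => sphereIntegral_derivAlong_of_mem_skewAdjoint
    (rotationGenerator_mem_skewAdjoint _ _) hs fun x hx => contDiffAt_derivAlong (hf x hx) le_rfl _

theorem sphereIntegral_laplacian (hs : 0 < s) (hf : ∀ x ∈ sphere 0 s, ContDiffAt ℝ 2 f x) :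
    s ^ 2 * sphereIntegral (Δ f) s =
      sphereIntegral (derivAlong (.id ℝ E) (derivAlong (.id ℝ E) f)) s +
        ((finrank ℝ E : ℝ) - 2) * sphereIntegral (derivAlong (.id ℝ E) f) s := by
  let b := stdOrthonormalBasis ℝ E
  let D : (E → ℝ) → E → ℝ := derivAlong (.id ℝ E)
  have hD : ContinuousOn (D f) (sphere 0 s) := fun x hx =>
    (contDiffAt_derivAlong (k := 1) (hf x hx) le_rfl _).continuousAt.continuousWithinAt
  have hDD : ContinuousOn (D (D f)) (sphere 0 s) := continuousOn_derivAlong_derivAlong hf _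
  have hradial : ContinuousOn (fun x => D (D f) x + ((finrank ℝ E : ℝ) - 2) * D f x) (sphere 0 s) :=
    hDD.add (continuousOn_const.mul hD)
  have hrot := continuousOn_finsetSum Finset.univ fun i _ => continuousOn_finsetSum Finset.univ
    fun j _ => continuousOn_derivAlong_derivAlong hf (rotationGenerator (b i) (b j))
  calc s ^ 2 * sphereIntegral (Δ f) s
      = sphereIntegral (fun x => (D (D f) x + ((finrank ℝ E : ℝ) - 2) * D f x) +
          2⁻¹ * ∑ i, ∑ j, derivAlong (rotationGenerator (b i) (b j))
            (derivAlong (rotationGenerator (b i) (b j)) f) x) s := by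
        rw [← sphereIntegral_const_mul]
        refine sphereIntegral_congr hs fun x hx => ?_
        rw [sum_sum_derivAlong_rotationGenerator b (hf x hx), mem_sphere_zero_iff_norm.1 hx]
        ring
    _ = sphereIntegral (D (D f)) s + ((finrank ℝ E : ℝ) - 2) * sphereIntegral (D f) s := by
        rw [sphereIntegral_add_const_mul hs hradial hrot,
          sphereIntegral_sum_sum_derivAlong_rotationGenerator _ hs hf, mul_zero, add_zero,
          sphereIntegral_add_const_mul hs hDD hD]

end Laplacian

section MonotoneDensity

variable {k R a β : ℝ} {F H : ℝ → ℝ}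

/-- The divided difference of `F` with respect to `t ↦ -t ^ (-k) / k` over `[s, 2s]`. -/
noncomputable def dyadicSlope (k : ℝ) (F : ℝ → ℝ) (s : ℝ) : ℝ :=
  k * (F (2 * s) - F s) / (s ^ (-k) - (2 * s) ^ (-k))

theorem rpow_neg_sub_rpow_neg_two_mul_pos {s : ℝ} (hk : 0 < k) (hs : 0 < s) :
    0 < s ^ (-k) - (2 * s) ^ (-k) :=
  sub_pos.2 (Real.rpow_lt_rpow_of_neg hs (by linarith) (neg_neg_of_pos hk))

theorem exists_mem_Ioo_eq_dyadicSlope {s : ℝ} (hk : 0 < k) (hs : 0 < s)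
    (hF : ∀ t ∈ Icc s (2 * s), HasDerivAt F (t ^ (-k - 1) * H t) t) :
    ∃ t ∈ Ioo s (2 * s), H t = dyadicSlope k F s := by
  have hpow : ∀ t, 0 < t → HasDerivAt (fun t : ℝ => t ^ (-k)) (-k * t ^ (-k - 1)) t := fun t ht =>
    Real.hasDerivAt_rpow_const (Or.inl ht.ne')
  have hpos : ∀ t ∈ Icc s (2 * s), 0 < t := fun t ht => hs.trans_le ht.1
  obtain ⟨t, ht, hslope⟩ := exists_ratio_hasDerivAt_eq_ratio_slope F _ (by linarith : s < 2 * s)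
    (fun t ht => (hF t ht).continuousAt.continuousWithinAt)
    (fun t ht => hF t (Ioo_subset_Icc_self ht)) (fun t : ℝ => t ^ (-k)) _
    (fun t ht => (hpow t (hpos t ht)).continuousAt.continuousWithinAt)
    (fun t ht => hpow t (hpos t (Ioo_subset_Icc_self ht)))
  have htpow : 0 < t ^ (-k - 1) := Real.rpow_pos_of_pos (hs.trans ht.1) _
  refine ⟨t, ht, ?_⟩
  rw [dyadicSlope, eq_div_iff (rpow_neg_sub_rpow_neg_two_mul_pos hk hs).ne']
  apply mul_left_cancel₀ htpow.ne'
  linear_combination -hslope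

theorem tendsto_dyadicSlope (hk : 0 < k)
    (hF : Tendsto (fun s => s ^ k * (F s - a)) atTop (𝓝 β)) :
    Tendsto (dyadicSlope k F) atTop (𝓝 (-k * β)) := by
  have htwo : Tendsto (fun s : ℝ => 2 * s) atTop atTop := tendsto_id.const_mul_atTop two_pos
  have hpow : (1 : ℝ) - 2 ^ (-k) ≠ 0 :=
    (sub_pos.2 (Real.rpow_lt_one_of_one_lt_of_neg one_lt_two (neg_neg_of_pos hk))).ne'
  have hlim := (((hF.comp htwo).const_mul (2 ^ (-k))).sub hF).const_mul (k / (1 - 2 ^ (-k)))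
  convert hlim.congr' ?_ using 2
  · field_simp
    ring
  · filter_upwards [eventually_gt_atTop 0] with s hs
    have hden : s ^ (-k) - (2 * s) ^ (-k) = (1 - 2 ^ (-k)) / s ^ k := by
      rw [Real.mul_rpow two_pos.le hs.le, Real.rpow_neg hs.le]
      ring
    have hcancel : (2 : ℝ) ^ (-k) * (2 * s) ^ k = s ^ k := by
      rw [Real.mul_rpow two_pos.le hs.le, ← mul_assoc, ← Real.rpow_add two_pos, neg_add_cancel,
        Real.rpow_zero, one_mul]
    rw [Function.comp_apply, dyadicSlope, hden, ← mul_assoc, hcancel]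
    field_simp
    ring

theorem tendsto_of_monotoneOn_of_hasDerivAt_rpow_mul (hk : 0 < k) (hH : MonotoneOn H (Ioi R))
    (hF : ∀ t ∈ Ioi R, HasDerivAt F (t ^ (-k - 1) * H t) t)
    (hlim : Tendsto (fun s => s ^ k * (F s - a)) atTop (𝓝 β)) :
    Tendsto H atTop (𝓝 (-k * β)) := by
  have hslope := tendsto_dyadicSlope hk hlim
  have hbetween : ∀ᶠ s in atTop, H s ≤ dyadicSlope k F s ∧ dyadicSlope k F s ≤ H (2 * s) := by
    filter_upwards [eventually_gt_atTop R, eventually_gt_atTop 0] with s hRs hs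
    have hR : ∀ t ∈ Icc s (2 * s), t ∈ Ioi R := fun t ht => hRs.trans_le ht.1
    obtain ⟨t, ht, hHt⟩ := exists_mem_Ioo_eq_dyadicSlope hk hs fun t ht => hF t (hR t ht)
    have ht' := Ioo_subset_Icc_self ht
    exact hHt ▸ ⟨hH hRs (hR t ht') ht'.1, hH (hR t ht') (hR _ (by constructor <;> linarith)) ht'.2⟩
  have hhalf : Tendsto (fun s : ℝ => s / 2) atTop atTop := tendsto_id.atTop_div_const two_pos
  refine tendsto_of_tendsto_of_tendsto_of_le_of_le' (hslope.comp hhalf) hslope ?_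
    (hbetween.mono fun _ h => h.1)
  filter_upwards [hhalf.eventually hbetween] with s h
  simpa [mul_div_cancel₀] using h.2

end MonotoneDensity

section ExpansionAtInfinity

theorem eventually_forall_mem_sphere {E : Type*} [SeminormedAddCommGroup E] {p : E → Prop}
    (hp : ∀ᶠ x in Bornology.cobounded E, p x) : ∀ᶠ s in atTop, ∀ x ∈ sphere (0 : E) s, p x := by
  rw [← comap_norm_atTop, eventually_comap] at hp
  exact hp.mono fun s h x hx => h x (mem_sphere_zero_iff_norm.1 hx)

/-- The expansion `f = a + c ‖x‖ ^ (2 - n) + o(‖x‖ ^ (2 - n))` at infinity, where `n = dim E`. -/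
def HasExpansionAtInfinity {E : Type*} [NormedAddCommGroup E] [Module ℝ E] (f : E → ℝ)
    (a c : ℝ) : Prop :=
  (fun x => f x - a - c * ‖x‖ ^ (2 - (finrank ℝ E : ℝ))) =o[Bornology.cobounded E]
    fun x => ‖x‖ ^ (2 - (finrank ℝ E : ℝ))

theorem isLittleO_rpow_rpow_atTop {p q : ℝ} (hpq : p < q) :
    (fun t : ℝ => t ^ p) =o[atTop] fun t => t ^ q := by
  refine isLittleO_of_tendsto' ?_
    ((tendsto_rpow_neg_atTop (sub_pos.2 hpq)).congr' ?_)
  · filter_upwards [eventually_gt_atTop 0] with t ht h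
    exact absurd h (Real.rpow_pos_of_pos ht q).ne'
  · filter_upwards [eventually_gt_atTop 0] with t ht
    rw [neg_sub, Real.rpow_sub ht]

variable {E : Type*} [NormedAddCommGroup E] [Module ℝ E] {f : E → ℝ} {a c : ℝ}

namespace HasExpansionAtInfinity

theorem of_abs_sub_le {R C q : ℝ} (hq : q < 2 - (finrank ℝ E : ℝ))
    (hf : ∀ x, R < ‖x‖ → |f x - a - c * ‖x‖ ^ (2 - (finrank ℝ E : ℝ))| ≤ C * ‖x‖ ^ q) :
    HasExpansionAtInfinity f a c := by
  refine IsBigO.trans_isLittleO (.of_bound C ?_)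
    ((isLittleO_rpow_rpow_atTop hq).comp_tendsto tendsto_norm_cobounded_atTop)
  filter_upwards [tendsto_norm_cobounded_atTop.eventually_gt_atTop R] with x hx
  simpa [abs_of_nonneg (Real.rpow_nonneg (norm_nonneg x) _)] using hf x hx

theorem isBigO_sub (hf : HasExpansionAtInfinity f a c) :
    (fun x => f x - a) =O[Bornology.cobounded E] fun x => ‖x‖ ^ (2 - (finrank ℝ E : ℝ)) :=
  (hf.isBigO.add ((isBigO_refl _ _).const_mul_left c)).congr_left fun _ => sub_add_cancel _ _

theorem tendsto (hf : HasExpansionAtInfinity f a c) (hn : 2 < finrank ℝ E) :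
    Tendsto f (Bornology.cobounded E) (𝓝 a) := by
  have hn' : (0 : ℝ) < finrank ℝ E - 2 := sub_pos.2 (by exact_mod_cast hn)
  have hpow := (tendsto_rpow_neg_atTop hn').comp (tendsto_norm_cobounded_atTop (E := E))
  simp only [neg_sub] at hpow
  exact tendsto_sub_nhds_zero_iff.1 (hf.isBigO_sub.trans_tendsto hpow)

theorem comp {φ : ℝ → ℝ} {φ' : ℝ} (hf : HasExpansionAtInfinity f a c) (hn : 2 < finrank ℝ E)
    (hφ : HasDerivAt φ φ' a) : HasExpansionAtInfinity (φ ∘ f) (φ a) (φ' * c) := by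
  have htaylor := (hφ.isLittleO.comp_tendsto (hf.tendsto hn)).trans_isBigO hf.isBigO_sub
  refine (htaylor.add (hf.const_mul_left φ')).congr_left fun x => ?_
  simp only [Function.comp_apply, smul_eq_mul]
  ring

end HasExpansionAtInfinity

end ExpansionAtInfinity

section SphereFlux

open InnerProductSpace

variable {E : Type*} [NormedAddCommGroup E] [InnerProductSpace ℝ E] [MeasurableSpace E]
  [BorelSpace E] {f : E → ℝ} {R s a c : ℝ}

/-- The flux of `∇ f` through the sphere of radius `s`. The exponent is `n - 2` rather than `n - 1`
because the Euler operator `derivAlong (.id ℝ E)` is `s` times the outward normal derivative. -/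
noncomputable def sphereFlux (f : E → ℝ) (s : ℝ) : ℝ :=
  s ^ ((finrank ℝ E : ℝ) - 2) * sphereIntegral (derivAlong (.id ℝ E) f) s

theorem sphereFlux_neg (f : E → ℝ) (s : ℝ) : sphereFlux (-f) s = -sphereFlux f s := by
  simp [sphereFlux, sphereIntegral, derivAlong, fderiv_neg, integral_neg]

theorem setIntegral_sphere_derivAlong_id (hn : 1 ≤ finrank ℝ E) (hs : 0 < s) (f : E → ℝ) :
    ∫ x in sphere (0 : E) s, derivAlong (.id ℝ E) f x ∂μH[(finrank ℝ E : ℝ) - 1] =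
      s * sphereFlux f s := by
  rw [setIntegral_sphere_hausdorffMeasure (sub_nonneg.2 (by exact_mod_cast hn)) hs, smul_eq_mul,
    sphereFlux, sphereIntegral, ← mul_assoc, mul_comm s, ← Real.rpow_add_one hs.ne']
  ring_nf

variable [FiniteDimensional ℝ E]

theorem hasDerivAt_sphereIntegral_sphereFlux (hs : 0 < s)
    (hf : ∀ x ∈ sphere 0 s, ContDiffAt ℝ 1 f x) :
    HasDerivAt (sphereIntegral f) (s ^ (-((finrank ℝ E : ℝ) - 2) - 1) * sphereFlux f s) s := by
  convert hasDerivAt_sphereIntegral hs hf using 1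
  rw [sphereFlux, ← mul_assoc, ← Real.rpow_add hs, ← Real.rpow_neg_one]
  ring_nf

theorem hasDerivAt_sphereFlux (hs : 0 < s) (hf : ∀ x ∈ sphere 0 s, ContDiffAt ℝ 2 f x) :
    HasDerivAt (sphereFlux f) (s ^ ((finrank ℝ E : ℝ) - 1) * sphereIntegral (Δ f) s) s := by
  have hpow := Real.hasDerivAt_rpow_const (p := (finrank ℝ E : ℝ) - 2) (Or.inl hs.ne')
  have hint := hasDerivAt_sphereIntegral hs fun x hx =>
    contDiffAt_derivAlong (hf x hx) le_rfl (.id ℝ E)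
  refine (hpow.mul hint).congr_deriv ?_
  have hsucc : s ^ ((finrank ℝ E : ℝ) - 1) = s ^ ((finrank ℝ E : ℝ) - 2 - 1) * s ^ 2 := by
    rw [← Real.rpow_add_natCast hs.ne']
    ring_nf
  have hpred : s ^ ((finrank ℝ E : ℝ) - 2) * s⁻¹ = s ^ ((finrank ℝ E : ℝ) - 2 - 1) := by
    rw [← div_eq_mul_inv, Real.rpow_sub_one hs.ne']
  rw [hsucc, mul_assoc _ (s ^ 2), sphereIntegral_laplacian hs hf, ← mul_assoc (s ^ _) s⁻¹,
    hpred]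
  ring

theorem monotoneOn_sphereFlux (hR : 0 ≤ R) (hf : ∀ x, R < ‖x‖ → ContDiffAt ℝ 2 f x)
    (hΔ : ∀ x, R < ‖x‖ → 0 ≤ Δ f x) : MonotoneOn (sphereFlux f) (Ioi R) := by
  have hderiv : ∀ s ∈ Ioi R, HasDerivAt (sphereFlux f)
      (s ^ ((finrank ℝ E : ℝ) - 1) * sphereIntegral (Δ f) s) s := fun s hs =>
    hasDerivAt_sphereFlux (hR.trans_lt hs) fun x hx => hf x (mem_sphere_zero_iff_norm.1 hx ▸ hs)
  refine monotoneOn_of_hasDerivWithinAt_nonneg (convex_Ioi R)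
    (fun s hs => (hderiv s hs).continuousAt.continuousWithinAt)
    (fun s hs => (hderiv s (interior_subset hs)).hasDerivWithinAt) fun s hs => ?_
  have hRs : R < s := interior_subset hs
  have hs0 : 0 < s := hR.trans_lt hRs
  refine mul_nonneg (Real.rpow_nonneg hs0.le _)
    (setIntegral_nonneg isClosed_sphere.measurableSet fun x hx => hΔ _ ?_)
  rwa [mem_sphere_zero_iff_norm.1 (smul_mem_sphere hs0 hx)]

theorem isLittleO_sphereIntegral {φ : ℝ → ℝ} (h : f =o[Bornology.cobounded E] fun x => φ ‖x‖) :
    sphereIntegral f =o[atTop] φ := by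
  set area := (μH[(finrank ℝ E : ℝ) - 1]).real (sphere (0 : E) 1)
  have hO : ∀ ε > 0, ∀ᶠ s in atTop, ‖sphereIntegral f s‖ ≤ ε * area * ‖φ s‖ := fun ε hε => by
    filter_upwards [eventually_forall_mem_sphere (h.bound hε), eventually_gt_atTop 0] with s hfs hs
    have hbound : ∀ x ∈ sphere (0 : E) 1, ‖f (s • x)‖ ≤ ε * ‖φ s‖ := fun x hx => by
      have hsx := smul_mem_sphere hs hx
      simpa only [mem_sphere_zero_iff_norm.1 hsx] using hfs _ hsx
    exact (norm_setIntegral_le_of_norm_le_const hausdorffMeasure_sphere_lt_top hbound).trans_eq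
      (mul_right_comm _ _ _)
  refine isLittleO_iff.2 fun ε hε => (hO (ε / (area + 1)) (by positivity)).mono fun s hs =>
    hs.trans (mul_le_mul_of_nonneg_right ?_ (norm_nonneg _))
  rw [div_mul_eq_mul_div]
  exact div_le_of_le_mul₀ (by positivity) hε.le (by gcongr; linarith)

theorem tendsto_rpow_mul_sphereIntegral_sub (hf : ∀ x, R < ‖x‖ → ContinuousAt f x)
    (hexp : HasExpansionAtInfinity f a c) :
    Tendsto (fun s => s ^ ((finrank ℝ E : ℝ) - 2) * (sphereIntegral f s -
      a * (μH[(finrank ℝ E : ℝ) - 1]).real (sphere (0 : E) 1))) atTop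
      (𝓝 (c * (μH[(finrank ℝ E : ℝ) - 1]).real (sphere (0 : E) 1))) := by
  set area := (μH[(finrank ℝ E : ℝ) - 1]).real (sphere (0 : E) 1)
  have hrem := (isLittleO_sphereIntegral (φ := fun t => t ^ (2 - (finrank ℝ E : ℝ))) hexp
    ).tendsto_div_nhds_zero.add_const (c * area)
  rw [zero_add] at hrem
  refine hrem.congr' ?_
  filter_upwards [eventually_gt_atTop R, eventually_gt_atTop 0] with s hRs hs
  have hfs : ContinuousOn f (sphere 0 s) := fun x hx =>
    (hf x (mem_sphere_zero_iff_norm.1 hx ▸ hRs)).continuousWithinAt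
  have hsplit : sphereIntegral (fun x => f x - a - c * ‖x‖ ^ (2 - (finrank ℝ E : ℝ))) s =
      sphereIntegral f s + (-a - c * s ^ (2 - (finrank ℝ E : ℝ))) * area := by
    have hone : sphereIntegral (fun _ : E => 1) s = area := by rw [sphereIntegral_const, one_mul]
    rw [← hone, ← sphereIntegral_add_const_mul hs hfs continuousOn_const]
    refine sphereIntegral_congr hs fun x hx => ?_
    rw [mem_sphere_zero_iff_norm.1 hx]
    ring
  have hpow : s ^ ((finrank ℝ E : ℝ) - 2) * s ^ (2 - (finrank ℝ E : ℝ)) = 1 := by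
    rw [← Real.rpow_add hs]
    simp
  rw [hsplit, div_add' _ _ _ (Real.rpow_pos_of_pos hs _).ne',
    div_eq_iff (Real.rpow_pos_of_pos hs _).ne']
  linear_combination (a * area - sphereIntegral f s) * hpow

theorem tendsto_sphereFlux_of_laplacian_nonneg (hn : 2 < finrank ℝ E)
    (hf : ∀ x, R < ‖x‖ → ContDiffAt ℝ 2 f x) (hΔ : ∀ x, R < ‖x‖ → 0 ≤ Δ f x)
    (hexp : HasExpansionAtInfinity f a c) :
    Tendsto (sphereFlux f) atTop (𝓝 (-((finrank ℝ E : ℝ) - 2) *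
      (c * (μH[(finrank ℝ E : ℝ) - 1]).real (sphere (0 : E) 1)))) := by
  have hR : ∀ x : E, max R 0 < ‖x‖ → R < ‖x‖ := fun x hx => (le_max_left R 0).trans_lt hx
  refine tendsto_of_monotoneOn_of_hasDerivAt_rpow_mul (sub_pos.2 (by exact_mod_cast hn))
    (monotoneOn_sphereFlux (le_max_right R 0) (fun x hx => hf x (hR x hx))
      fun x hx => hΔ x (hR x hx)) (fun s hs => ?_)
    (tendsto_rpow_mul_sphereIntegral_sub (fun x hx => (hf x hx).continuousAt) hexp)
  exact hasDerivAt_sphereIntegral_sphereFlux ((le_max_right R 0).trans_lt hs) fun x hx =>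
    (hf x (hR x (mem_sphere_zero_iff_norm.1 hx ▸ hs))).of_le one_le_two

theorem tendsto_sphereFlux_of_laplacian_nonpos (hn : 2 < finrank ℝ E)
    (hf : ∀ x, R < ‖x‖ → ContDiffAt ℝ 2 f x) (hΔ : ∀ x, R < ‖x‖ → Δ f x ≤ 0)
    (hexp : HasExpansionAtInfinity f a c) :
    Tendsto (sphereFlux f) atTop (𝓝 (-((finrank ℝ E : ℝ) - 2) *
      (c * (μH[(finrank ℝ E : ℝ) - 1]).real (sphere (0 : E) 1)))) := by
  have hexp' : HasExpansionAtInfinity (-f) (-a) (-c) :=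
    hexp.neg_left.congr_left fun x => by simp only [Pi.neg_apply]; ring
  have h := (tendsto_sphereFlux_of_laplacian_nonneg (f := -f) hn (fun x hx => (hf x hx).neg)
    (fun x hx => by rw [laplacian_neg]; exact neg_nonneg.2 (hΔ x hx)) hexp').neg
  simp only [sphereFlux_neg, neg_neg] at h
  convert h using 2
  ring

theorem tendsto_sphereFlux_rpow (hn : 2 < finrank ℝ E) (hf : ∀ x, R < ‖x‖ → ContDiffAt ℝ 2 f x)
    (hΔ : ∀ x, R < ‖x‖ → Δ f x = 0) (ha : 0 < a) (hexp : HasExpansionAtInfinity f a c) (p : ℝ) :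
    Tendsto (sphereFlux fun x => f x ^ p) atTop (𝓝 (-((finrank ℝ E : ℝ) - 2) *
      (p * a ^ (p - 1) * c * (μH[(finrank ℝ E : ℝ) - 1]).real (sphere (0 : E) 1)))) := by
  obtain ⟨S, -, hS⟩ := hasBasis_cobounded_norm.eventually_iff.1
    ((hexp.tendsto hn).eventually_const_lt ha)
  have hR : ∀ x : E, max R S < ‖x‖ → R < ‖x‖ := fun x hx => (le_max_left R S).trans_lt hx
  have hpos : ∀ x : E, max R S < ‖x‖ → 0 < f x := fun x hx => hS ((le_max_right R S).trans hx.le)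
  have hexp_pow : HasExpansionAtInfinity (fun x => f x ^ p) (a ^ p) (p * a ^ (p - 1) * c) :=
    hexp.comp hn (Real.hasDerivAt_rpow_const (Or.inl ha.ne'))
  have hsmooth : ∀ x, max R S < ‖x‖ → ContDiffAt ℝ 2 (fun x => f x ^ p) x := fun x hx =>
    (hf x (hR x hx)).rpow_const_of_ne (hpos x hx).ne'
  have hΔpow : ∀ x, max R S < ‖x‖ → Δ (fun x => f x ^ p) x =
      p * (p - 1) * (f x ^ (p - 2) * ‖fderiv ℝ f x‖ ^ 2) := fun x hx => by
    rw [laplacian_rpow (hf x (hR x hx)) (hpos x hx), hΔ x (hR x hx)]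
    ring
  have hnonneg : ∀ x, max R S < ‖x‖ → 0 ≤ f x ^ (p - 2) * ‖fderiv ℝ f x‖ ^ 2 := fun x hx =>
    mul_nonneg (Real.rpow_nonneg (hpos x hx).le _) (sq_nonneg _)
  rcases le_total 0 (p * (p - 1)) with hp | hp
  · exact tendsto_sphereFlux_of_laplacian_nonneg hn hsmooth
      (fun x hx => hΔpow x hx ▸ mul_nonneg hp (hnonneg x hx)) hexp_pow
  · exact tendsto_sphereFlux_of_laplacian_nonpos hn hsmooth
      (fun x hx => hΔpow x hx ▸ mul_nonpos_of_nonpos_of_nonneg hp (hnonneg x hx)) hexp_pow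

end SphereFlux

section ConformallyFlat

variable {n : ℕ} {U : EuclideanSpace ℝ (Fin n) → ℝ} {Ω : Set (EuclideanSpace ℝ (Fin n))}
  {x : EuclideanSpace ℝ (Fin n)}

namespace HarmonicOnSet

theorem contDiffAt (hU : HarmonicOnSet U Ω) (hΩ : IsOpen Ω) (hx : x ∈ Ω) : ContDiffAt ℝ 2 U x :=
  (hU.1.contDiffAt (hΩ.mem_nhds hx)).of_le (WithTop.coe_le_coe.2 le_top)

theorem laplacian_eq_zero (hU : HarmonicOnSet U Ω) (hΩ : IsOpen Ω) (hx : x ∈ Ω) : Δ U x = 0 := by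
  have hd : DifferentiableAt ℝ (fderiv ℝ U) x :=
    ((hU.contDiffAt hΩ hx).fderiv_right (m := 1) le_rfl).differentiableAt one_ne_zero
  rw [laplacian_eq_sum_fderiv_fderiv (EuclideanSpace.basisFun (Fin n) ℝ), ← hU.2 x hx]
  refine Finset.sum_congr rfl fun i _ => ?_
  rw [EuclideanSpace.basisFun_apply, fderiv_clm_apply hd (differentiableAt_const _)]
  simp

end HarmonicOnSet

theorem sum_fderiv_single_mul_apply (f : EuclideanSpace ℝ (Fin n) → ℝ)
    (x : EuclideanSpace ℝ (Fin n)) :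
    ∑ j, fderiv ℝ f x (EuclideanSpace.single j 1) * x j = derivAlong (.id ℝ _) f x := by
  have hx := congrArg (fderiv ℝ f x) ((EuclideanSpace.basisFun (Fin n) ℝ).sum_repr x)
  simpa [derivAlong, mul_comm] using hx

theorem sum_sum_fderiv_confMetric_sub_mul
    (hU : DifferentiableAt ℝ (fun y => U y ^ ((4 : ℝ) / ((n : ℝ) - 2))) x) (σ : ℝ) :
    ∑ i, ∑ j, (fderiv ℝ (fun y => confMetric n U y i j) x (EuclideanSpace.single i 1) -
        fderiv ℝ (fun y => confMetric n U y i i) x (EuclideanSpace.single j 1)) * (x j / σ) =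
      -((n : ℝ) - 1) / σ *
        derivAlong (.id ℝ _) (fun y => U y ^ ((4 : ℝ) / ((n : ℝ) - 2))) x := by
  simp only [confMetric, fderiv_mul_const hU, if_true, smul_apply, smul_eq_mul, ite_mul, one_mul,
    zero_mul, sub_mul, Finset.sum_sub_distrib, Finset.sum_ite_eq, Finset.mem_univ,
    Finset.sum_const, Finset.card_univ, Fintype.card_fin, nsmul_eq_mul, mul_div_assoc',
    ← Finset.sum_div, sum_fderiv_single_mul_apply]
  ring

theorem setIntegral_sphere_sum_sum_fderiv_confMetric_sub_mul {σ : ℝ} (hn : 1 ≤ n) (hσ : 0 < σ)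
    (hU : ∀ x ∈ sphere 0 σ, DifferentiableAt ℝ (fun y => U y ^ ((4 : ℝ) / ((n : ℝ) - 2))) x) :
    ∫ x in sphere (0 : EuclideanSpace ℝ (Fin n)) σ,
        (∑ i, ∑ j, (fderiv ℝ (fun y => confMetric n U y i j) x (EuclideanSpace.single i 1) -
          fderiv ℝ (fun y => confMetric n U y i i) x (EuclideanSpace.single j 1)) * (x j / σ))
        ∂μH[(n : ℝ) - 1] =
      -((n : ℝ) - 1) * sphereFlux (fun y => U y ^ ((4 : ℝ) / ((n : ℝ) - 2))) σ := by
  have hflux := setIntegral_sphere_derivAlong_id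
    (by rwa [finrank_euclideanSpace_fin]) hσ fun y => U y ^ ((4 : ℝ) / ((n : ℝ) - 2))
  rw [finrank_euclideanSpace_fin] at hflux
  rw [setIntegral_congr_fun isClosed_sphere.measurableSet fun x hx =>
    sum_sum_fderiv_confMetric_sub_mul (hU x hx) σ, integral_const_mul, hflux]
  field_simp

theorem adm_mass_of_harmonically_flat_end_general {R a b : ℝ} (hn : 3 ≤ n) (ha : 0 < a)
    (hharm : HarmonicOnSet U {x | R < ‖x‖}) (hexp : HasExpansionAtInfinity U a b) :
    Tendsto
      (fun σ : ℝ =>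
        (1 / (2 * ((n : ℝ) - 1) *
          (μH[(n : ℝ) - 1] (sphere (0 : EuclideanSpace ℝ (Fin n)) 1)).toReal)) *
        ∫ x in sphere (0 : EuclideanSpace ℝ (Fin n)) σ,
          (∑ i, ∑ j, (fderiv ℝ (fun y => confMetric n U y i j) x (EuclideanSpace.single i 1) -
            fderiv ℝ (fun y => confMetric n U y i i) x (EuclideanSpace.single j 1)) * (x j / σ))
          ∂μH[(n : ℝ) - 1])
      atTop (𝓝 (2 * (a ^ ((4 : ℝ) / ((n : ℝ) - 2) - 1) * b))) := by
  have hopen : IsOpen {x : EuclideanSpace ℝ (Fin n) | R < ‖x‖} :=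
    isOpen_lt continuous_const continuous_norm
  have hfin : finrank ℝ (EuclideanSpace ℝ (Fin n)) = n := finrank_euclideanSpace_fin
  have hn' : 2 < finrank ℝ (EuclideanSpace ℝ (Fin n)) := by rwa [hfin]
  have : Nontrivial (EuclideanSpace ℝ (Fin n)) := nontrivial_of_finrank_pos (two_pos.trans hn')
  have harea := ENNReal.toReal_pos (hausdorffMeasure_sphere_ne_zero (E := EuclideanSpace ℝ (Fin n)))
    hausdorffMeasure_sphere_lt_top.ne
  have hflux := tendsto_sphereFlux_rpow hn' (fun x hx => hharm.contDiffAt hopen hx)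
    (fun x hx => hharm.laplacian_eq_zero hopen hx) ha hexp (4 / ((n : ℝ) - 2))
  rw [hfin] at harea hflux
  have hn3 : (3 : ℝ) ≤ n := by exact_mod_cast hn
  have hpos := eventually_forall_mem_sphere ((hexp.tendsto hn').eventually_const_lt ha)
  have hmass : 2 * (a ^ ((4 : ℝ) / ((n : ℝ) - 2) - 1) * b) =
      1 / (2 * ((n : ℝ) - 1) *
        (μH[(n : ℝ) - 1] (sphere (0 : EuclideanSpace ℝ (Fin n)) 1)).toReal) *
      (-((n : ℝ) - 1) * (-((n : ℝ) - 2) * (4 / ((n : ℝ) - 2) *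
        a ^ ((4 : ℝ) / ((n : ℝ) - 2) - 1) * b *
        (μH[(n : ℝ) - 1]).real (sphere (0 : EuclideanSpace ℝ (Fin n)) 1)))) := by
    have hn1 : (n : ℝ) - 1 ≠ 0 := by linarith
    have hn2 : (n : ℝ) - 2 ≠ 0 := by linarith
    rw [measureReal_def]
    field_simp
    ring
  rw [hmass]
  refine ((hflux.const_mul _).const_mul _).congr' ?_
  filter_upwards [hpos, eventually_gt_atTop R, eventually_gt_atTop 0] with σ hUσ hRσ hσ
  rw [setIntegral_sphere_sum_sum_fderiv_confMetric_sub_mul (by omega) hσ fun x hx => ?_]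
  exact ((hharm.contDiffAt hopen (hRσ.trans_eq (mem_sphere_zero_iff_norm.1 hx).symm)
    ).differentiableAt two_ne_zero).rpow_const (Or.inl (hUσ x hx).ne')

end ConformallyFlat

/-- the ADM mass of a harmonically flat end with conformal factor
`U = 1 + b‖x‖^{2-n} + O(‖x‖^{1-n})` exists and equals `2b`. -/
theorem adm_mass_of_harmonically_flat_end
    (n : ℕ) (hn : 3 ≤ n) (R b C : ℝ) (hR : 0 < R) (hC : 0 < C)
    (U : EuclideanSpace ℝ (Fin n) → ℝ)
    (hpos : ∀ x : EuclideanSpace ℝ (Fin n), R < ‖x‖ → 0 < U x)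
    (hharm : HarmonicOnSet U {x : EuclideanSpace ℝ (Fin n) | R < ‖x‖})
    (hexp : ∀ x : EuclideanSpace ℝ (Fin n), R < ‖x‖ →
      |U x - 1 - b * ‖x‖ ^ ((2 : ℝ) - n)| ≤ C * ‖x‖ ^ ((1 : ℝ) - n)) :
    Tendsto
      (fun σ : ℝ =>
        (1 / (2 * ((n : ℝ) - 1) *
          (μH[(n : ℝ) - 1] (Metric.sphere (0 : EuclideanSpace ℝ (Fin n)) 1)).toReal)) *
        ∫ x in Metric.sphere (0 : EuclideanSpace ℝ (Fin n)) σ,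
          (∑ i : Fin n, ∑ j : Fin n,
            (fderiv ℝ (fun y => confMetric n U y i j) x (EuclideanSpace.single i (1:ℝ))
              - fderiv ℝ (fun y => confMetric n U y i i) x
                  (EuclideanSpace.single j (1:ℝ))) * (x j / σ))
          ∂(μH[(n : ℝ) - 1]))
      atTop (nhds (2 * b)) := by
  simpa using adm_mass_of_harmonically_flat_end_general hn one_pos hharm
    (.of_abs_sub_le (q := 1 - n) (by simp) (by simpa using hexp))
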